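/- Let n > k > t ≥ 1 be integers and let 𝓕 be a maximal t-intersecting k-uniform hypergraph on [n]. Then there exists a subfamily 𝓕₀ ⊆ 𝓕 with |𝓕₀| ≤ binom(2(k−t)+1, k−t) such that 𝓕 = {G : G is a k-element subset of [n] with |G ∩ F| ≥ t for all F ∈ 𝓕₀}. -/

import Mathlib

/-- A family of edges forms a `k`-uniform hypergraph on `[n]`. -/
def IsKUniform (n k : ℕ) (H : Finset (Finset (Fin n))) : Prop :=
  ∀ e ∈ H, e.card = k

/-- A hypergraph is `t`-intersecting if any two of its edges share at least `t` vertices. -/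
def IsTIntersectingHyp (n t : ℕ) (H : Finset (Finset (Fin n))) : Prop :=
  ∀ e ∈ H, ∀ f ∈ H, t ≤ (e ∩ f).card

/-!
Let `F₀` be a minimal generating subfamily of `F`. By minimality each `e ∈ F₀` has a `k`-set `g e`
meeting `e` in fewer than `t` points and every other member of `F₀` in at least `t`. Since `F` is
`t`-intersecting, the pairs `(e, g e)` followed by the pairs `(g e, e)` form a skew system: the two
sets of a pair share fewer than `t` points, while the first set of a pair shares at least `t`
points with the second set of any later pair. Füredi's threshold version of the skew Bollobás
theorem then gives `2 |F₀| ≤ binom(2(k-t)+2, k-t+1) = 2 binom(2(k-t)+1, k-t)`.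

For the threshold theorem, regard the points of the finite union `U` of all sets involved as
distinct rationals, and assign to `S ⊆ U` the space of polynomials of degree less than
`|U| + 1 - t` vanishing on `U \ S`. It has dimension `|S| + 1 - t`, and the spaces of `S` and `S'`
meet trivially exactly when `|S ∩ S'| < t`. A generic linear map to a space of dimension `p + q`,
where `p` and `q` are the dimensions attached to the first and second sets, preserves the
trivial intersections, and Lovász's determinant argument in an exterior power bounds the length
of the system by `binom(p+q, p)`.
-/

open Module Polynomial

section LinearAlgebra

theorem linearIndependent_of_triangular_dual {ι R M : Type*} [Finite ι] [LinearOrder ι]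
    [CommRing R] [IsDomain R] [AddCommGroup M] [Module R M] (w : ι → M) (φ : ι → Dual R M)
    (hdiag : ∀ i, φ i (w i) ≠ 0) (hzero : ∀ i j, i < j → φ i (w j) = 0) :
    LinearIndependent R w := by
  cases nonempty_fintype ι
  let A : Matrix ι ι R := .of fun j i ↦ φ i (w j)
  have htri : A.IsUpperTriangular := fun j i hij ↦ hzero i j hij
  have hdet : A.det ≠ 0 := by
    rw [Matrix.det_of_isUpperTriangular htri]
    exact Finset.prod_ne_zero_iff.2 fun i _ ↦ hdiag i
  exact .of_comp (LinearMap.pi φ) (Matrix.linearIndependent_rows_of_det_ne_zero hdet)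

/-- The alternating map `w ↦ f (u, w)` in the second block of arguments of `f`, the first block
being fixed to `u`. -/
def alternatingMapFixLeft {R M N α β : Type*} [CommSemiring R] [AddCommMonoid M] [Module R M]
    [AddCommMonoid N] [Module R N] (f : M [⋀^α ⊕ β]→ₗ[R] N) (u : α → M) : M [⋀^β]→ₗ[R] N where
  toMultilinearMap := f.toMultilinearMap.currySum u
  map_eq_zero_of_eq' w i j hw hij :=
    f.map_eq_zero_of_eq (Sum.elim u w) (i := .inr i) (j := .inr j) hw (Sum.inr_injective.ne hij)

variable {ι K V : Type*} [Field K] [AddCommGroup V] [Module K V] {p q : ℕ}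

theorem exists_linearMap_disjoint_ker [Finite ι] [Infinite K] {N : ℕ} (X : ι → Submodule K V)
    [∀ i, FiniteDimensional K (X i)] (hX : ∀ i, finrank K (X i) ≤ N) :
    ∃ π : V →ₗ[K] Fin N → K, ∀ i, Disjoint (X i) (LinearMap.ker π) := by
  induction N generalizing X with
  | zero =>
    refine ⟨0, fun i ↦ ?_⟩
    rw [Submodule.finrank_eq_zero.1 (Nat.le_zero.1 (hX i))]
    exact disjoint_bot_left
  | succ N ih =>
    choose v hvX hv using fun i : {i // X i ≠ ⊥} ↦ Submodule.exists_mem_ne_zero_of_ne_bot i.2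
    obtain ⟨f, hf⟩ := Module.exists_dual_forall_apply_ne_zero (K := K) v hv
    have hdrop (i : ι) : finrank K ↥(X i ⊓ LinearMap.ker f) ≤ N := by
      by_cases hi : X i = ⊥
      · rw [hi, bot_inf_eq, finrank_bot]
        exact N.zero_le
      · have hlt : X i ⊓ LinearMap.ker f < X i :=
          inf_le_left.lt_of_not_ge fun hle ↦ hf ⟨i, hi⟩ (hle (hvX ⟨i, hi⟩)).2
        exact Nat.le_of_lt_succ ((Submodule.finrank_lt_finrank_of_lt hlt).trans_le (hX i))
    obtain ⟨π, hπ⟩ := ih _ hdrop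
    refine ⟨f.vecCons π, fun i ↦ Submodule.disjoint_def.2 fun x hx hker ↦ ?_⟩
    obtain ⟨hfx, hπx⟩ := Matrix.cons_eq_zero_iff.1 (LinearMap.mem_ker.1 hker)
    exact Submodule.disjoint_def.1 (hπ i) x ⟨hx, hfx⟩ hπx

theorem exists_linearIndependent_span_range_eq (S : Submodule K V) [FiniteDimensional K S]
    (hS : finrank K S = p) :
    ∃ a : Fin p → V, LinearIndependent K a ∧ Submodule.span K (Set.range a) = S := by
  let e := finBasisOfFinrankEq K S hS
  refine ⟨S.subtype ∘ e, e.linearIndependent.map' _ S.ker_subtype, ?_⟩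
  rw [Set.range_comp, ← Submodule.map_span, e.span_eq, Submodule.map_subtype_top]

variable [Fintype ι] [LinearOrder ι]

theorem card_le_choose_of_skew_linearIndependent [FiniteDimensional K V]
    (hV : finrank K V = p + q) (a : ι → Fin p → V) (b : ι → Fin q → V)
    (hdiag : ∀ i, LinearIndependent K (Sum.elim (a i) (b i)))
    (hskew : ∀ i j, i < j → ¬ LinearIndependent K (Sum.elim (a i) (b j))) :
    Fintype.card ι ≤ (p + q).choose p := by
  let e : Basis (Fin p ⊕ Fin q) K V := (finBasisOfFinrankEq K V hV).reindex finSumFinEquiv.symm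
  let φ (i : ι) : Dual K (⋀[K]^q V) :=
    exteriorPower.alternatingMapLinearEquiv (alternatingMapFixLeft e.det (a i))
  have hφ (i j : ι) : φ i (exteriorPower.ιMulti K q (b j)) = e.det (Sum.elim (a i) (b j)) :=
    exteriorPower.alternatingMapLinearEquiv_apply_ιMulti _ _
  have hli : LinearIndependent K fun j ↦ exteriorPower.ιMulti K q (b j) := by
    refine linearIndependent_of_triangular_dual _ φ (fun i ↦ ?_) fun i j hij ↦ ?_
    · rw [hφ]
      have hspan := (hdiag i).span_eq_top_of_card_eq_finrank' (by simp [hV])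
      exact (e.is_basis_iff_det.1 ⟨hdiag i, hspan⟩).ne_zero
    · rw [hφ, e.det.map_linearDependent _ (hskew i j hij)]
  calc Fintype.card ι ≤ finrank K (⋀[K]^q V) := hli.fintype_card_le_finrank
    _ = (p + q).choose p := by rw [exteriorPower.finrank_eq, hV, Nat.choose_symm_add]

theorem card_le_choose_of_skew_disjoint_submodule [Infinite K] (A B : ι → Submodule K V)
    [∀ i, FiniteDimensional K (A i)] [∀ i, FiniteDimensional K (B i)]
    (hA : ∀ i, finrank K (A i) = p) (hB : ∀ i, finrank K (B i) = q)
    (hdiag : ∀ i, Disjoint (A i) (B i)) (hskew : ∀ i j, i < j → ¬ Disjoint (A i) (B j)) :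
    Fintype.card ι ≤ (p + q).choose p := by
  choose a ha haA using fun i ↦ exists_linearIndependent_span_range_eq (A i) (hA i)
  choose b hb hbB using fun i ↦ exists_linearIndependent_span_range_eq (B i) (hB i)
  have hAB (i : ι) : finrank K ↥(A i ⊔ B i) ≤ p + q :=
    (Submodule.finrank_add_le_finrank_add_finrank _ _).trans_eq (by rw [hA, hB])
  obtain ⟨π, hπ⟩ := exists_linearMap_disjoint_ker _ hAB
  refine card_le_choose_of_skew_linearIndependent (finrank_fin_fun K)
    (fun i ↦ π ∘ a i) (fun i ↦ π ∘ b i) (fun i ↦ ?_) fun i j hij hli ↦ hskew i j hij ?_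
  · rw [← Sum.comp_elim]
    refine ((ha i).sum_type (hb i) (by rw [haA, hbB]; exact hdiag i)).map ?_
    rw [Set.Sum.elim_range, Submodule.span_union, haA, hbB]
    exact hπ i
  · rw [← Sum.comp_elim] at hli
    rw [← haA, ← hbB]
    exact (linearIndependent_sum.1 hli.of_comp).2.2

end LinearAlgebra

section Polynomials

variable {K V : Type*} [Field K] {x : V → K} {N : ℕ}

/-- The polynomials of degree less than `N` vanishing at every point `x v` with `v ∈ Z`. -/
noncomputable def degreeLTVanishing (x : V → K) (N : ℕ) (Z : Finset V) :
    Submodule K (degreeLT K N) :=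
  LinearMap.ker (LinearMap.pi fun v : Z ↦ (leval (x v)).domRestrict (degreeLT K N))

theorem mem_degreeLTVanishing {Z : Finset V} {f : degreeLT K N} :
    f ∈ degreeLTVanishing x N Z ↔ ∀ v ∈ Z, (f : K[X]).eval (x v) = 0 := by
  simp [degreeLTVanishing, funext_iff]

theorem degreeLTVanishing_inf [DecidableEq V] (Z Z' : Finset V) :
    degreeLTVanishing x N Z ⊓ degreeLTVanishing x N Z' = degreeLTVanishing x N (Z ∪ Z') := by
  ext f
  simp only [Submodule.mem_inf, mem_degreeLTVanishing, Finset.forall_mem_union]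

theorem finrank_degreeLTVanishing {Z : Finset V} (hx : Set.InjOn x Z) :
    finrank K (degreeLTVanishing x N Z) = N - Z.card := by
  classical
  obtain hN | hN := le_total N Z.card
  · have hbot : degreeLTVanishing x N Z = ⊥ := by
      refine (Submodule.eq_bot_iff _).2 fun f hf ↦ Subtype.ext ?_
      have hdeg : (f : K[X]).degree < Z.card :=
        (mem_degreeLT.1 f.2).trans_le (Nat.cast_le.2 hN)
      exact eq_zero_of_degree_lt_of_eval_index_eq_zero _ hx hdeg (mem_degreeLTVanishing.1 hf)
    rw [hbot, finrank_bot, Nat.sub_eq_zero_of_le hN]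
  · let ev := LinearMap.pi fun v : Z ↦ (leval (x v)).domRestrict (degreeLT K N)
    have hsurj : Function.Surjective ev := fun r ↦ by
      let r' (v : V) : K := if hv : v ∈ Z then r ⟨v, hv⟩ else 0
      have hdeg : (Lagrange.interpolate Z x r').degree < N :=
        (Lagrange.degree_interpolate_lt r' hx).trans_le (Nat.cast_le.2 hN)
      refine ⟨⟨_, mem_degreeLT.2 hdeg⟩, funext fun v ↦ ?_⟩
      exact (Lagrange.eval_interpolate_at_node r' hx v.2).trans (dif_pos v.2)
    have hrank := ev.finrank_range_add_finrank_ker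
    rw [LinearMap.range_eq_top.2 hsurj, finrank_top, finrank_fintype_fun_eq_card,
      Fintype.card_coe, (degreeLTEquiv K N).finrank_eq, finrank_fin_fun] at hrank
    exact Nat.eq_sub_of_add_eq' hrank

theorem disjoint_degreeLTVanishing_iff [DecidableEq V] {Z Z' : Finset V}
    (hx : Set.InjOn x ↑(Z ∪ Z')) :
    Disjoint (degreeLTVanishing x N Z) (degreeLTVanishing x N Z') ↔ N ≤ (Z ∪ Z').card := by
  rw [disjoint_iff, degreeLTVanishing_inf, ← Submodule.finrank_eq_zero (R := K),
    finrank_degreeLTVanishing hx, Nat.sub_eq_zero_iff_le]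

end Polynomials

section SetFamilies

open Finset

variable {V ι : Type*} [DecidableEq V] {k l t : ℕ}

theorem card_le_choose_of_skew_card_inter [Fintype ι] [LinearOrder ι] (A B : ι → Finset V)
    (hA : ∀ i, #(A i) = k) (hB : ∀ i, #(B i) = l) (hdiag : ∀ i, #(A i ∩ B i) < t)
    (hskew : ∀ i j, i < j → t ≤ #(A i ∩ B j)) :
    Fintype.card ι ≤ ((k + 1 - t) + (l + 1 - t)).choose (k + 1 - t) := by
  let U : Finset V := univ.biUnion A ∪ univ.biUnion B
  have hAU (i : ι) : A i ⊆ U := (subset_biUnion_of_mem A (mem_univ i)).trans subset_union_left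
  have hBU (i : ι) : B i ⊆ U := (subset_biUnion_of_mem B (mem_univ i)).trans subset_union_right
  obtain ⟨x, hx⟩ : ∃ x : V → ℚ, Set.InjOn x U :=
    have ⟨f, hf⟩ := Set.countable_iff_exists_injOn.1 U.countable_toSet
    ⟨fun v ↦ f v, Nat.cast_injective.comp_injOn hf⟩
  let W (S : Finset V) := degreeLTVanishing x (#U + 1 - t) (U \ S)
  have hfinrank {S : Finset V} (hS : S ⊆ U) : finrank ℚ (W S) = #S + 1 - t := by
    rw [finrank_degreeLTVanishing (hx.mono (coe_subset.2 sdiff_subset)), card_sdiff_of_subset hS]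
    have := card_le_card hS
    omega
  have hdisj (i j : ι) : Disjoint (W (A i)) (W (B j)) ↔ #(A i ∩ B j) < t := by
    have hinter : A i ∩ B j ⊆ U := inter_subset_left.trans (hAU i)
    have hunion : U \ A i ∪ U \ B j = U \ (A i ∩ B j) := (sdiff_inter_distrib_right ..).symm
    rw [disjoint_degreeLTVanishing_iff (hx.mono (by rw [hunion]; exact coe_subset.2 sdiff_subset)),
      hunion, card_sdiff_of_subset hinter]
    have := card_le_card hinter
    omega
  exact card_le_choose_of_skew_disjoint_submodule (fun i ↦ W (A i)) (fun i ↦ W (B i))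
    (fun i ↦ by rw [hfinrank (hAU i), hA]) (fun i ↦ by rw [hfinrank (hBU i), hB])
    (fun i ↦ (hdisj i i).2 (hdiag i)) fun i j hij ↦ by
      rw [hdisj]
      exact (hskew i j hij).not_gt

theorem card_le_choose_of_intersecting_of_critical [Fintype ι] (htk : t ≤ k)
    (e g : ι → Finset V) (he : ∀ i, #(e i) = k) (hg : ∀ i, #(g i) = k)
    (hee : ∀ i j, t ≤ #(e i ∩ e j)) (hge : ∀ i j, i ≠ j → t ≤ #(g i ∩ e j))
    (hdiag : ∀ i, #(g i ∩ e i) < t) :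
    Fintype.card ι ≤ (2 * (k - t) + 1).choose (k - t) := by
  let _ : LinearOrder ι := .lift' _ (Fintype.equivFin ι).injective
  have hskew : Fintype.card (ι ⊕ₗ ι) ≤ ((k + 1 - t) + (k + 1 - t)).choose (k + 1 - t) := by
    refine card_le_choose_of_skew_card_inter (t := t) (fun i ↦ Sum.elim e g (ofLex i))
      (fun i ↦ Sum.elim g e (ofLex i)) ?_ ?_ ?_ ?_
    · rintro (i | i)
      exacts [he i, hg i]
    · rintro (i | i)
      exacts [hg i, he i]
    · rintro (i | i)
      exacts [inter_comm (g i) (e i) ▸ hdiag i, hdiag i]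
    · rintro _ _ (⟨hij⟩ | ⟨hij⟩ | _)
      exacts [inter_comm (g _) (e _) ▸ hge _ _ hij.ne', hge _ _ hij.ne, hee _ _]
  have hchoose : ((k + 1 - t) + (k + 1 - t)).choose (k + 1 - t) =
      2 * (2 * (k - t) + 1).choose (k - t) := by
    rw [Nat.sub_add_comm htk, ← two_mul, show 2 * (k - t + 1) = 2 * (k - t) + 1 + 1 by ring,
      Nat.choose_succ_succ, Nat.choose_symm_half, ← two_mul]
  have hcard : Fintype.card (ι ⊕ₗ ι) = 2 * Fintype.card ι :=
    (Fintype.card_sum ..).trans (two_mul _).symm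
  omega

/-- The `k`-element sets meeting every member of `S` in at least `t` points; a family `S`
generates a `t`-intersecting hypergraph `F` when this is `F`. -/
def crossIntersectingSets (k t : ℕ) (S : Set (Finset V)) : Set (Finset V) :=
  {G | #G = k ∧ ∀ e ∈ S, t ≤ #(G ∩ e)}

theorem crossIntersectingSets_anti {S S' : Set (Finset V)} (h : S ⊆ S') :
    crossIntersectingSets k t S' ⊆ crossIntersectingSets k t S :=
  fun _ hG ↦ ⟨hG.1, fun e he ↦ hG.2 e (h he)⟩

-- If no finite subfamily suffices, greedily chosen pairs `(e, G)` with `#(e ∩ G) < t` and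
-- `G` meeting all earlier `e` form an infinite skew system.
theorem exists_finset_crossIntersectingSets_eq {S : Set (Finset V)} (hS : S.Sized l) :
    ∃ T : Finset (Finset V), ↑T ⊆ S ∧
      crossIntersectingSets k t T = crossIntersectingSets k t S := by
  by_contra! hne
  let IsCritical (x : Finset V × Finset V) : Prop := x.1 ∈ S ∧ #x.2 = k ∧ #(x.1 ∩ x.2) < t
  have hnext (s : Finset (Finset V × Finset V)) (hs : ∀ x ∈ s, IsCritical x) :
      ∃ y, IsCritical y ∧ ∀ x ∈ s, t ≤ #(x.1 ∩ y.2) := by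
    have hsub : ↑(s.image Prod.fst) ⊆ S := by
      rw [coe_image, Set.image_subset_iff]
      exact fun x hx ↦ (hs x hx).1
    have hnot : ¬ crossIntersectingSets k t (s.image Prod.fst) ⊆ crossIntersectingSets k t S :=
      fun h ↦ hne _ hsub (h.antisymm (crossIntersectingSets_anti hsub))
    obtain ⟨G, hG, hGS⟩ := Set.not_subset.1 hnot
    obtain ⟨e, he, hlt⟩ : ∃ e ∈ S, #(G ∩ e) < t := by
      by_contra! hle
      exact hGS ⟨hG.1, hle⟩
    refine ⟨(e, G), ⟨he, hG.1, inter_comm G e ▸ hlt⟩, fun x hx ↦ ?_⟩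
    exact inter_comm G x.1 ▸ hG.2 x.1 (mem_coe.2 (mem_image_of_mem _ hx))
  obtain ⟨f, hf, hskew⟩ := exists_seq_of_forall_finset_exists IsCritical _ hnext
  have hbound (m : ℕ) : m ≤ ((l + 1 - t) + (k + 1 - t)).choose (l + 1 - t) := by
    simpa using card_le_choose_of_skew_card_inter (fun i : Fin m ↦ (f i).1) (fun i ↦ (f i).2)
      (fun i ↦ hS (hf i).1) (fun i ↦ (hf i).2.1) (fun i ↦ (hf i).2.2) fun i j hij ↦ hskew i j hij
  exact (hbound _).not_gt (Nat.lt_succ_self _)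

theorem exists_card_inter_lt_of_minimal {C : Set (Finset V)} {T : Finset (Finset V)}
    (hT : Minimal (fun T : Finset (Finset V) ↦ crossIntersectingSets k t T = C) T)
    {e : Finset V} (he : e ∈ T) :
    ∃ G ∈ crossIntersectingSets k t (T.erase e), #(G ∩ e) < t := by
  by_contra! hle
  have herase : crossIntersectingSets k t (T.erase e) = C := by
    refine Set.Subset.antisymm (fun G hG ↦ ?_) ?_
    · rw [← hT.prop]
      refine ⟨hG.1, fun f hf ↦ ?_⟩
      obtain rfl | hfe := eq_or_ne f e
      · exact hle G hG
      · exact hG.2 f (mem_coe.2 (mem_erase.2 ⟨hfe, hf⟩))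
    · rw [← hT.prop]
      exact crossIntersectingSets_anti (coe_subset.2 (erase_subset e T))
  exact notMem_erase e T (hT.le_of_le herase (erase_subset e T) he)

theorem crossIntersectingSets_eq_of_maximal (htk : t ≤ k) {F : Set (Finset V)}
    (hF : Maximal (fun H : Set (Finset V) ↦ H.Sized k ∧ Set.IsIntersectingOf (Set.Ici t) H) F) :
    crossIntersectingSets k t F = F := by
  obtain ⟨hsized, hint⟩ := hF.prop
  refine Set.Subset.antisymm (fun G hG ↦ ?_) fun G hG ↦ ⟨hsized hG, fun e he ↦ ?_⟩
  · refine hF.le_of_ge ⟨?_, ?_⟩ (Set.subset_insert G F) (Set.mem_insert G F)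
    · rintro e (rfl | he)
      exacts [hG.1, hsized he]
    · refine hint.insert fun e he _ ↦ ⟨hG.2 e he, ?_⟩
      rw [inter_comm]
      exact hG.2 e he
  · obtain rfl | hne := eq_or_ne G e
    · rwa [inter_self, hsized hG]
    · exact hint hG he hne

theorem maximal_t_intersecting_hypergraph_has_small_generating_set_general (htk : t ≤ k)
    {F : Set (Finset V)}
    (hF : Maximal (fun H : Set (Finset V) ↦ H.Sized k ∧ Set.IsIntersectingOf (Set.Ici t) H) F) :
    ∃ F₀ : Finset (Finset V), ↑F₀ ⊆ F ∧ #F₀ ≤ (2 * (k - t) + 1).choose (k - t) ∧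
      crossIntersectingSets k t F₀ = F := by
  have hself := crossIntersectingSets_eq_of_maximal htk hF
  obtain ⟨T, hTF, hT⟩ := exists_finset_crossIntersectingSets_eq (t := t) (k := k) hF.prop.1
  obtain ⟨F₀, hF₀T, hmin⟩ := exists_minimal_le_of_wellFoundedLT
    (fun T : Finset (Finset V) ↦ crossIntersectingSets k t T = F) T (hT.trans hself)
  have hF₀F : ↑F₀ ⊆ F := (coe_subset.2 hF₀T).trans hTF
  choose g hg hlt using fun e : F₀ ↦ exists_card_inter_lt_of_minimal hmin e.2
  have hee (e f : F₀) : t ≤ #(e.1 ∩ f.1) := (hself.ge (hF₀F e.2)).2 f (hF₀F f.2)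
  have hge (e f : F₀) (hef : e ≠ f) : t ≤ #(g e ∩ f) :=
    (hg e).2 f (mem_coe.2 (mem_erase.2 ⟨Subtype.coe_ne_coe.2 hef.symm, f.2⟩))
  have hcard := card_le_choose_of_intersecting_of_critical htk (fun e : F₀ ↦ e.1) g
    (fun e ↦ hF.prop.1 (hF₀F e.2)) (fun e ↦ (hg e).1) hee hge hlt
  exact ⟨F₀, hF₀F, by simpa using hcard, hmin.prop⟩

end SetFamilies

theorem maximal_t_intersecting_hypergraph_has_small_generating_set
    (n k t : ℕ) (ht : 1 ≤ t) (htk : t < k) (hkn : k < n)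
    (F : Finset (Finset (Fin n))) (hunif : IsKUniform n k F)
    (hF : IsTIntersectingHyp n t F)
    (hmax : ∀ H : Finset (Finset (Fin n)), IsKUniform n k H →
      IsTIntersectingHyp n t H → F ⊆ H → F = H) :
    ∃ F₀ ⊆ F, F₀.card ≤ (2 * (k - t) + 1).choose (k - t) ∧
      ∀ G : Finset (Fin n), G ∈ F ↔ (G.card = k ∧ ∀ e ∈ F₀, t ≤ (G ∩ e).card) := by
  have hmaximal : Maximal (fun H : Set (Finset (Fin n)) ↦
      H.Sized k ∧ Set.IsIntersectingOf (Set.Ici t) H) F := by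
    refine ⟨⟨hunif, fun e he f hf _ ↦ hF e he f hf⟩, fun H ⟨hsized, hint⟩ hFH ↦ ?_⟩
    lift H to Finset (Finset (Fin n)) using H.toFinite
    refine (hmax H hsized (fun e he f hf ↦ ?_) hFH).ge
    obtain rfl | hne := eq_or_ne e f
    · rw [Finset.inter_self, hsized he]
      exact htk.le
    · exact hint he hf hne
  obtain ⟨F₀, hsub, hcard, hgen⟩ :=
    maximal_t_intersecting_hypergraph_has_small_generating_set_general htk.le hmaximal
  exact ⟨F₀, hsub, hcard, fun G ↦ (Set.ext_iff.1 hgen G).symm⟩
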